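/- Let (M,g,φ,ξ,η) be a (2n+1)-dimensional para-Sasaki-like Riemannian manifold with generalized symmetric metric connection ∇̄, where α and β are constants. Then the curvature tensor R̄ of ∇̄ satisfies R̄(x,y)ξ = αη(y)φx + (β−1)η(y)x − (β−1)η(x)y − αη(x)φy for all vector fields x,y. -/

import Mathlib

/-- Abstract algebraic model of an almost paracontact almost paracomplex
Riemannian (apapR) manifold of dimension `2 n + 1`.  Here `R` plays the role of
the commutative ring of smooth functions `C^∞(M)` and `V` the `R`-module of
vector fields.  `act x f` is the derivative `x(f)` of a function along a vector
field, `bracket` is the Lie bracket, `g` the Riemannian metric, `(phi, xi, eta)`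
the almost paracontact almost paracomplex structure, `nab` the Levi-Civita
connection of `g` and `e` a (local) orthonormal frame with `e 0 = xi`. -/
structure ApapR (R V : Type*) [CommRing R] [Algebra ℝ R]
    [AddCommGroup V] [Module R V] where
  n : ℕ
  act : V → R → R
  bracket : V → V → V
  g : V → V → R
  phi : V → V
  xi : V
  eta : V → R
  nab : V → V → V
  e : Fin (2 * n + 1) → V
  act_addl : ∀ x y f, act (x + y) f = act x f + act y f
  act_smull : ∀ (h : R) (x : V) f, act (h • x) f = h * act x f
  act_addr : ∀ x f h, act x (f + h) = act x f + act x h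
  act_mul : ∀ x f h, act x (f * h) = f * act x h + h * act x f
  g_symm : ∀ x y, g x y = g y x
  g_addl : ∀ x y z, g (x + y) z = g x z + g y z
  g_smull : ∀ (f : R) x y, g (f • x) y = f * g x y
  phi_add : ∀ x y, phi (x + y) = phi x + phi y
  phi_smul : ∀ (f : R) x, phi (f • x) = f • phi x
  eta_eq : ∀ x, eta x = g x xi
  -- apapR structure axioms
  eta_xi : eta xi = 1
  phi_phi : ∀ x, phi (phi x) = x - eta x • xi
  phi_xi : phi xi = 0
  g_phi_phi : ∀ x y, g (phi x) (phi y) = g x y - eta x * eta y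
  -- orthonormal frame, `tr φ = 0`
  e_zero : e 0 = xi
  e_orthonormal : ∀ i j, g (e i) (e j) = if i = j then 1 else 0
  trace_phi : (∑ i, g (phi (e i)) (e i)) = 0
  -- Levi-Civita connection axioms
  nab_addl : ∀ x y z, nab (x + y) z = nab x z + nab y z
  nab_smull : ∀ (f : R) x y, nab (f • x) y = f • nab x y
  nab_addr : ∀ x y z, nab x (y + z) = nab x y + nab x z
  nab_leibniz : ∀ x (f : R) y, nab x (f • y) = f • nab x y + act x f • y
  nab_metric : ∀ x y z, act x (g y z) = g (nab x y) z + g y (nab x z)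
  nab_torsion : ∀ x y, nab x y - nab y x = bracket x y

namespace ApapR

variable {R V : Type*} [CommRing R] [Algebra ℝ R] [AddCommGroup V] [Module R V]

/-- The para-Sasaki-like condition `(∇_x φ)y = −g(x,y)ξ − η(y)x + 2η(x)η(y)ξ`. -/
def IsParaSasakiLike (S : ApapR R V) : Prop :=
  ∀ x y, S.nab x (S.phi y) - S.phi (S.nab x y)
    = -(S.g x y • S.xi) - S.eta y • x + (2 * S.eta x * S.eta y) • S.xi

/-- The generalized symmetric metric connection
`∇̄_x y = ∇_x y + α{g(x,y)ξ − η(y)x} + β{g(φx,y)ξ − η(y)φx}`. -/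
def gsmc (S : ApapR R V) (α β : R) (x y : V) : V :=
  S.nab x y + (α * S.g x y) • S.xi - (α * S.eta y) • x
    + (β * S.g (S.phi x) y) • S.xi - (β * S.eta y) • S.phi x

/-- Curvature tensor of a connection `D`:
`R_D(x,y)z = D_x D_y z − D_y D_x z − D_[x,y] z`. -/
def curv (S : ApapR R V) (D : V → V → V) (x y z : V) : V :=
  D x (D y z) - D y (D x z) - D (S.bracket x y) z

/-- Ricci tensor of a connection `D` with respect to the orthonormal frame. -/
def ric (S : ApapR R V) (D : V → V → V) (x y : V) : R :=
  ∑ i, S.g (S.curv D (S.e i) x y) (S.e i)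

/-- Scalar curvature of a connection `D`. -/
def scal (S : ApapR R V) (D : V → V → V) : R :=
  ∑ i, S.ric D (S.e i) (S.e i)

/-- Divergence of a vector field with respect to a connection `D`. -/
def divg (S : ApapR R V) (D : V → V → V) (x : V) : R :=
  ∑ i, S.g (D (S.e i) x) (S.e i)

/-- The associated metric `g̃(x,y) = g(x,φy) + η(x)η(y)`. -/
def tg (S : ApapR R V) (x y : V) : R := S.g x (S.phi y) + S.eta x * S.eta y

/-- A function is constant iff all its derivatives vanish. -/
def IsConstant (S : ApapR R V) (f : R) : Prop := ∀ x, S.act x f = 0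

end ApapR

namespace ApapR

variable {R V : Type*} [CommRing R] [Algebra ℝ R] [AddCommGroup V] [Module R V]

theorem aux_nab_zero (S : ApapR R V) (x : V) : S.nab x 0 = 0 := by
  have h := S.nab_addr x 0 0
  simpa using h

theorem aux_nab_sub (S : ApapR R V) (x y z : V) :
    S.nab x (y - z) = S.nab x y - S.nab x z := by
  have h := S.nab_addr x (y - z) z
  rw [sub_add_cancel] at h
  rw [h, add_sub_cancel_right]

theorem aux_phi_sub (S : ApapR R V) (y z : V) :
    S.phi (y - z) = S.phi y - S.phi z := by
  have h := S.phi_add (y - z) z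
  rw [sub_add_cancel] at h
  rw [h, add_sub_cancel_right]

theorem aux_g_subl (S : ApapR R V) (x y z : V) :
    S.g (x - y) z = S.g x z - S.g y z := by
  have h := S.g_addl (x - y) y z
  rw [sub_add_cancel] at h
  rw [h, add_sub_cancel_right]

theorem aux_g_addr (S : ApapR R V) (x y z : V) :
    S.g x (y + z) = S.g x y + S.g x z := by
  rw [S.g_symm, S.g_addl, S.g_symm y, S.g_symm z]

theorem aux_g_subr (S : ApapR R V) (x y z : V) :
    S.g x (y - z) = S.g x y - S.g x z := by
  rw [S.g_symm, aux_g_subl, S.g_symm y, S.g_symm z]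

theorem aux_g_smulr (S : ApapR R V) (f : R) (x y : V) :
    S.g x (f • y) = f * S.g x y := by
  rw [S.g_symm, S.g_smull, S.g_symm y]

theorem aux_act_one (S : ApapR R V) (x : V) : S.act x 1 = 0 := by
  have h := S.act_mul x 1 1
  simpa using h

theorem aux_g_xi_xi (S : ApapR R V) : S.g S.xi S.xi = 1 := by
  rw [← S.eta_eq, S.eta_xi]

theorem aux_g_phi_xi (S : ApapR R V) (x : V) : S.g (S.phi x) S.xi = 0 := by
  have h1 := S.phi_phi (S.phi x)
  have h2 : S.phi (S.phi (S.phi x)) = S.phi x := by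
    rw [S.phi_phi x, aux_phi_sub, S.phi_smul, S.phi_xi, smul_zero, sub_zero]
  rw [h2] at h1
  have h3 : S.eta (S.phi x) • S.xi = 0 := by
    have := sub_eq_self.mp h1.symm
    exact this
  have h4 : S.g (S.eta (S.phi x) • S.xi) S.xi = S.g ((0 : R) • S.xi) S.xi := by
    rw [h3, zero_smul]
  rw [S.g_smull, S.g_smull, aux_g_xi_xi, S.eta_eq] at h4
  simpa using h4

theorem aux_phi_symm (S : ApapR R V) (x y : V) :
    S.g (S.phi x) y = S.g x (S.phi y) := by
  have h := S.g_phi_phi x (S.phi y)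
  rw [S.phi_phi, aux_g_subr, aux_g_smulr, aux_g_phi_xi, S.eta_eq (S.phi y), aux_g_phi_xi] at h
  simpa using h

theorem aux_nab_xi (S : ApapR R V) (hS : S.IsParaSasakiLike) (x : V) :
    S.nab x S.xi = S.phi x := by
  have h := hS x S.xi
  rw [S.phi_xi, aux_nab_zero, S.eta_xi, ← S.eta_eq] at h
  have h1 : S.phi (S.nab x S.xi) = x - S.eta x • S.xi := by
    linear_combination (norm := module) (-1 : R) • h
  have h2 := congrArg S.phi h1
  rw [S.phi_phi, aux_phi_sub, S.phi_smul, S.phi_xi, smul_zero, sub_zero] at h2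
  have h3 := S.nab_metric x S.xi S.xi
  rw [aux_g_xi_xi, aux_act_one, S.g_symm S.xi] at h3
  have h4 : S.g (S.nab x S.xi) S.xi = 0 := by
    have h5 : algebraMap ℝ R (1/2) * 2 = 1 := by
      have : (2 : R) = algebraMap ℝ R 2 := (map_ofNat (algebraMap ℝ R) 2).symm
      rw [this, ← map_mul]; norm_num
    linear_combination (-S.g (S.nab x S.xi) S.xi) * h5 - algebraMap ℝ R (1/2) * h3
  rw [S.eta_eq, h4, zero_smul, sub_zero] at h2
  exact h2

theorem aux_gsmc_xi (S : ApapR R V) (hS : S.IsParaSasakiLike) (α β : R) (x : V) :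
    S.gsmc α β x S.xi
      = S.phi x - β • S.phi x - α • x + α • (S.g x S.xi • S.xi) := by
  unfold gsmc
  rw [aux_nab_xi S hS, S.eta_xi, aux_g_phi_xi]
  module

theorem aux_gsmc2 (S : ApapR R V) (hS : S.IsParaSasakiLike) (α β : R)
    (hα : S.IsConstant α) (hβ : S.IsConstant β) (x y : V) :
    S.gsmc α β x (S.gsmc α β y S.xi)
      = S.nab x (S.phi y) - β • S.nab x (S.phi y) - α • S.nab x y
        + α • (S.g y S.xi • S.phi x + (S.g (S.nab x y) S.xi + S.g y (S.phi x)) • S.xi)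
        + (α * ((1 - β) * S.g y (S.phi x) - α * S.g x y
            + α * (S.g x S.xi * S.g y S.xi))) • S.xi
        + (β * ((1 - β) * (S.g x y - S.g x S.xi * S.g y S.xi)
            - α * S.g y (S.phi x))) • S.xi := by
  have hs : S.g x (S.phi y) = S.g y (S.phi x) := by rw [← aux_phi_symm, S.g_symm]
  rw [aux_gsmc_xi S hS]
  unfold gsmc
  simp only [S.eta_eq, aux_nab_sub, S.nab_addr, S.nab_leibniz, hα x, hβ x, S.nab_metric,
    aux_nab_xi S hS, aux_g_subl, aux_g_subr, aux_g_addr, S.g_addl, aux_g_smulr, S.g_smull,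
    aux_g_phi_xi, aux_g_xi_xi, S.g_phi_phi, hs, S.g_symm (S.phi x) y]
  module

/-- `R̄(x,y)ξ = αη(y)φx + (β−1)η(y)x − (β−1)η(x)y − αη(x)φy`
on a para-Sasaki-like manifold, for constants `α`, `β`. -/
theorem curv_gsmc_xi (S : ApapR R V) (hS : S.IsParaSasakiLike) (α β : R)
    (hα : S.IsConstant α) (hβ : S.IsConstant β) (x y : V) :
    S.curv (S.gsmc α β) x y S.xi
      = (α * S.eta y) • S.phi x + ((β - 1) * S.eta y) • x
        - ((β - 1) * S.eta x) • y - (α * S.eta x) • S.phi y := by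
  have h1 := hS x y
  have h2 := hS y x
  have hs : S.g x (S.phi y) = S.g y (S.phi x) := by rw [← aux_phi_symm, S.g_symm]
  unfold curv
  rw [aux_gsmc2 S hS α β hα hβ, aux_gsmc2 S hS α β hα hβ, aux_gsmc_xi S hS, ← S.nab_torsion]
  simp only [aux_phi_sub, aux_g_subl, hs, S.g_symm y x, S.eta_eq] at h1 h2 ⊢
  linear_combination (norm := module) (1 - β) • h1 - (1 - β) • h2

end ApapR
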